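/- Fix q ≥ 1. For all complex vectors r, u, w ∈ ℂ^q, the ComplEx score satisfies Re(Σ_{k=1}^q r_k u_k conj(w_k)) = ⟨Re r, Re u, Re w⟩ + ⟨Re r, Im u, Im w⟩ + ⟨Im r, Re u, Im w⟩ − ⟨Im r, Im u, Re w⟩, where Re and Im are taken coordinatewise. Consequently, identifying each complex vector x ∈ ℂ^q with the real vector [Re x; Im x] ∈ ℝ^{2q} with 2 segments of length q, the ComplEx scoring function equals the S2S binary score f_z with m = 2 segments for the core tensor Z whose blocks are Z_{1,1,1} = I_1^2, Z_{1,2,2} = I_1^2, Z_{2,1,2} = I_1^2, Z_{2,2,1} = −I_1^2, and all other blocks zero. -/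

import Mathlib

open Finset

/-- The `j`-th segment (of length `q`) of a vector in `ℝ^(M·q)`:
coordinates `(j-1)q+1` through `jq` (1-based), i.e. `j·q, …, j·q + q - 1` (0-based). -/
def seg (M q : ℕ) (v : Fin (M * q) → ℝ) (j : Fin M) : Fin q → ℝ :=
  fun k => v (finProdFinEquiv (j, k))

/-- Multilinear inner product of `n+1` vectors in `ℝ^q`. -/
def mip (n q : ℕ) (v : Fin (n + 1) → Fin q → ℝ) : ℝ :=
  ∑ k : Fin q, ∏ i : Fin (n + 1), v i k

/-- The `(n+1)`-order superdiagonal tensor `I_v^n` of size `q` in each mode: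
`v` when all indices coincide, `0` elsewhere. -/
def diagT (n q : ℕ) (v : ℝ) : (Fin (n + 1) → Fin q) → ℝ :=
  fun k => if ∀ i, k i = k 0 then v else 0

/-- Tucker product of an `(n+1)`-order tensor of size `q` in each mode with
vectors `u 0, …, u n ∈ ℝ^q`. -/
def tucker (n q : ℕ) (G : (Fin (n + 1) → Fin q) → ℝ)
    (u : Fin (n + 1) → Fin q → ℝ) : ℝ :=
  ∑ k : Fin (n + 1) → Fin q, G k * ∏ i : Fin (n + 1), u i (k i)

/-- S2S score of vectors `vs 0 = r, vs 1 = e_1, …, vs n = e_n ∈ ℝ^(m·q)` with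
an S2S core tensor `Z` for arity `n` with `m` segments of size `q`. -/
def s2sScore (n m q : ℕ)
    (Z : (Fin (n + 1) → Fin m) → (Fin (n + 1) → Fin q) → ℝ)
    (vs : Fin (n + 1) → Fin (m * q) → ℝ) : ℝ :=
  ∑ j : Fin (n + 1) → Fin m, tucker n q (Z j) (fun i => seg m q (vs i) (j i))

/-- S2S score computed on the first `m` segments of vectors in `ℝ^(M·q)` (`m ≤ M`). -/
def s2sScoreFirst (n m M q : ℕ) (h : m ≤ M)
    (Z : (Fin (n + 1) → Fin m) → (Fin (n + 1) → Fin q) → ℝ)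
    (vs : Fin (n + 1) → Fin (M * q) → ℝ) : ℝ :=
  ∑ j : Fin (n + 1) → Fin m,
    tucker n q (Z j) (fun i => seg M q (vs i) (Fin.castLE h (j i)))

/-- A sparse core tensor: every block lies in `{-I_1^n, I_0^n, I_1^n}`. -/
def SparseCore (n m q : ℕ)
    (Z : (Fin (n + 1) → Fin m) → (Fin (n + 1) → Fin q) → ℝ) : Prop :=
  ∀ j, Z j = diagT n q (-1) ∨ Z j = diagT n q 0 ∨ Z j = diagT n q 1

/-- Identify a complex vector `x ∈ ℂ^q` with the real vector `[Re x; Im x] ∈ ℝ^(2·q)`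
with 2 segments of length `q`: segment 1 is the real part, segment 2 the imaginary part. -/
def realify (q : ℕ) (x : Fin q → ℂ) : Fin (2 * q) → ℝ :=
  fun idx =>
    if (finProdFinEquiv.symm idx).1 = (0 : Fin 2) then (x (finProdFinEquiv.symm idx).2).re
    else (x (finProdFinEquiv.symm idx).2).im

theorem tucker_diagT (n q : ℕ) (c : ℝ) (u : Fin (n + 1) → Fin q → ℝ) :
    tucker n q (diagT n q c) u = c * mip n q u := by
  have eq_zero_off_diagonal (k : Fin (n + 1) → Fin q)
      (hk : k ∉ Set.range (Function.const (Fin (n + 1)))) :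
      diagT n q c k * ∏ i, u i (k i) = 0 := by
    have not_const : ¬ ∀ i, k i = k 0 := fun h => hk ⟨k 0, funext fun i => (h i).symm⟩
    rw [diagT, if_neg not_const, zero_mul]
  rw [mip, mul_sum]
  exact (Fintype.sum_of_injective _ Function.const_injective _ _ eq_zero_off_diagonal
    fun k => by simp [diagT]).symm

theorem s2sScore_eq_sum_mip {n m q : ℕ} {c : (Fin (n + 1) → Fin m) → ℝ}
    {Z : (Fin (n + 1) → Fin m) → (Fin (n + 1) → Fin q) → ℝ} (hZ : ∀ j, Z j = diagT n q (c j))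
    (vs : Fin (n + 1) → Fin (m * q) → ℝ) :
    s2sScore n m q Z vs = ∑ j, c j * mip n q fun i => seg m q (vs i) (j i) := by
  simp only [s2sScore, hZ, tucker_diagT]

theorem mip_two {q : ℕ} (x y z : Fin q → ℝ) : mip 2 q ![x, y, z] = ∑ k, x k * y k * z k := by
  simp [mip, Fin.prod_univ_three]

theorem seg_vec3 {m q : ℕ} (x y z : Fin (m * q) → ℝ) (a b c : Fin m) :
    (fun i => seg m q (![x, y, z] i) (![a, b, c] i)) =
      ![seg m q x a, seg m q y b, seg m q z c] := by
  funext i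
  fin_cases i <;> rfl

theorem seg_realify_zero {q : ℕ} (x : Fin q → ℂ) :
    seg 2 q (realify q x) 0 = fun k => (x k).re := by
  funext k
  simp [seg, realify]

theorem seg_realify_one {q : ℕ} (x : Fin q → ℂ) :
    seg 2 q (realify q x) 1 = fun k => (x k).im := by
  funext k
  simp [seg, realify]

/-- The coefficients of the superdiagonal blocks of the ComplEx core tensor. The indices `j 0`,
`j 1`, `j 2` refer to the relation, head and tail; `0` selects the real part and `1` the
imaginary part. -/
def complExCoeff (j : Fin 3 → Fin 2) : ℝ :=
  if j = ![0, 0, 0] then 1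
  else if j = ![0, 1, 1] then 1
  else if j = ![1, 0, 1] then 1
  else if j = ![1, 1, 0] then -1
  else 0

theorem sum_complExCoeff_mul (f : (Fin 3 → Fin 2) → ℝ) :
    ∑ j, complExCoeff j * f j = f ![0, 0, 0] + f ![0, 1, 1] + f ![1, 0, 1] - f ![1, 1, 0] := by
  have eq_zero_off_support (j : Fin 3 → Fin 2)
      (hj : j ∉ ({![0, 0, 0], ![0, 1, 1], ![1, 0, 1], ![1, 1, 0]} : Finset (Fin 3 → Fin 2))) :
      complExCoeff j * f j = 0 := by
    simp only [mem_insert, mem_singleton, not_or] at hj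
    simp [complExCoeff, hj]
  rw [← sum_subset (subset_univ _) fun j _ => eq_zero_off_support j]
  simp [complExCoeff, add_assoc, sub_eq_add_neg]

theorem re_mul_mul_conj (a b c : ℂ) :
    (a * b * (starRingEnd ℂ) c).re =
      a.re * b.re * c.re + a.re * b.im * c.im + a.im * b.re * c.im - a.im * b.im * c.re := by
  simp only [Complex.mul_re, Complex.mul_im, Complex.conj_re, Complex.conj_im]
  ring

theorem re_sum_mul_mul_conj {q : ℕ} (r u w : Fin q → ℂ) :
    (∑ k, r k * u k * (starRingEnd ℂ) (w k)).re =
      mip 2 q ![fun k => (r k).re, fun k => (u k).re, fun k => (w k).re]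
        + mip 2 q ![fun k => (r k).re, fun k => (u k).im, fun k => (w k).im]
        + mip 2 q ![fun k => (r k).im, fun k => (u k).re, fun k => (w k).im]
        - mip 2 q ![fun k => (r k).im, fun k => (u k).im, fun k => (w k).re] := by
  simp only [Complex.re_sum, re_mul_mul_conj, mip_two, sum_add_distrib, sum_sub_distrib]

/-- the ComplEx score `Re(Σ_k r_k u_k conj(w_k))` decomposes into four
multilinear inner products of the coordinatewise real and imaginary parts, and — under
the identification `x ↦ [Re x; Im x] ∈ ℝ^(2q)` — it equals the S2S binary score with
`m = 2` segments for the sparse core tensor with blocks `Z_{1,1,1} = I_1^2`,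
`Z_{1,2,2} = I_1^2`, `Z_{2,1,2} = I_1^2`, `Z_{2,2,1} = -I_1^2` and all other blocks zero
(1-based block indices). -/
theorem complEx_as_s2s (q : ℕ) (hq : 1 ≤ q) (r u w : Fin q → ℂ)
    (Z : (Fin 3 → Fin 2) → (Fin 3 → Fin q) → ℝ)
    (hZ : ∀ j, Z j = diagT 2 q
      (if j = ![0, 0, 0] then 1
       else if j = ![0, 1, 1] then 1
       else if j = ![1, 0, 1] then 1
       else if j = ![1, 1, 0] then -1
       else 0)) :
    (∑ k : Fin q, r k * u k * (starRingEnd ℂ) (w k)).re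
        = mip 2 q ![fun k => (r k).re, fun k => (u k).re, fun k => (w k).re]
          + mip 2 q ![fun k => (r k).re, fun k => (u k).im, fun k => (w k).im]
          + mip 2 q ![fun k => (r k).im, fun k => (u k).re, fun k => (w k).im]
          - mip 2 q ![fun k => (r k).im, fun k => (u k).im, fun k => (w k).re]
    ∧ (∑ k : Fin q, r k * u k * (starRingEnd ℂ) (w k)).re
        = s2sScore 2 2 q Z ![realify q r, realify q u, realify q w] := by
  have re_score := re_sum_mul_mul_conj r u w
  refine ⟨re_score, re_score.trans ?_⟩
  rw [s2sScore_eq_sum_mip (c := complExCoeff) hZ, sum_complExCoeff_mul]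
  simp only [seg_vec3, seg_realify_zero, seg_realify_one]
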